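/- Let a consecutive transition instance with n moving labels be given whose movement graph G_M has a feedback arc set of size m. Then there exists an order in which to execute the n movements consecutively such that at most n + m overlaps occur during the transition. -/

import Mathlib

open Set

/-- The closed axis-aligned unit square with lower-left corner `a`. -/
def unitSq (a : ℝ × ℝ) : Set (ℝ × ℝ) :=
  Set.Icc a.1 (a.1 + 1) ×ˢ Set.Icc a.2 (a.2 + 1)

/-- Two unit squares, given by their lower-left corners, overlap if their interiors intersect. -/
def Overlap (a b : ℝ × ℝ) : Prop :=
  (interior (unitSq a) ∩ interior (unitSq b)).Nonempty

/-- `a` is the lower-left corner of one of the four candidate positions of point `p`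
(the four closed unit squares having `p` as a corner). -/
def IsCandidate (p a : ℝ × ℝ) : Prop :=
  a = p ∨ a = (p.1 - 1, p.2) ∨ a = (p.1, p.2 - 1) ∨ a = (p.1 - 1, p.2 - 1)

/-- Two unit squares (given by lower-left corners) share an edge. -/
def SharesEdge (a b : ℝ × ℝ) : Prop :=
  (a.1 = b.1 ∧ (a.2 - b.2 = 1 ∨ b.2 - a.2 = 1)) ∨
  (a.2 = b.2 ∧ (a.1 - b.1 = 1 ∨ b.1 - a.1 = 1))

/-- A movement of the unit-square label of point `p` from candidate position `S` to candidate
position `E`.  If `S` and `E` share an edge (a non-diagonal movement) we set `I = E` and the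
label translates directly from `S` to `E`; if `S` and `E` are diagonally opposite (a diagonal
movement) the label translates through the specified intermediate candidate position `I`,
which shares an edge with both `S` and `E`. -/
structure Movement where
  p : ℝ × ℝ
  S : ℝ × ℝ
  I : ℝ × ℝ
  E : ℝ × ℝ
  candS : IsCandidate p S
  candI : IsCandidate p I
  candE : IsCandidate p E
  legs : (I = E ∧ SharesEdge S E) ∨
    (SharesEdge S I ∧ SharesEdge I E ∧ S.1 ≠ E.1 ∧ S.2 ≠ E.2)

/-- A movement is diagonal if the start and end positions are diagonally opposite
(equivalently, the intermediate position differs from the end position). -/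
def Movement.Diagonal (m : Movement) : Prop := m.I ≠ m.E

/-- Position (lower-left corner) of a moving label at time `t` after the start of its movement:
unit-speed axis-aligned translation, one unit of time per axis-aligned leg; the label rests at
its start position before the movement begins and at its end position after it is finished. -/
noncomputable def Movement.pos (m : Movement) (t : ℝ) : ℝ × ℝ :=
  if t ≤ 0 then m.S
  else if t ≤ 1 then m.S + t • (m.I - m.S)
  else if t ≤ 2 then m.I + (t - 1) • (m.E - m.I)
  else m.E

/-- Duration of a movement: one unit of time per axis-aligned translation. -/
noncomputable def Movement.dur (m : Movement) : ℝ := if m.I = m.E then 1 else 2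

/-- A transition instance: finitely many stationary labels (given by their lower-left corners)
and `n` moving labels, each with a prescribed movement, such that the labeling `L₁` formed by
the stationary labels together with the start positions of the moving labels is overlap-free,
and the labeling `L₂` formed by the stationary labels together with the end positions of the
moving labels is overlap-free. -/
structure TransitionInstance (k n : ℕ) where
  stat : Fin k → ℝ × ℝ
  mov : Fin n → Movement
  free_start : ∀ a b : Fin k ⊕ Fin n, a ≠ b →
    ¬ Overlap (Sum.elim stat (fun j => (mov j).S) a)
      (Sum.elim stat (fun j => (mov j).S) b)
  free_end : ∀ a b : Fin k ⊕ Fin n, a ≠ b →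
    ¬ Overlap (Sum.elim stat (fun j => (mov j).E) a)
      (Sum.elim stat (fun j => (mov j).E) b)

/-- A schedule `τ` of starting times is consecutive if the execution intervals of the movements
are pairwise non-overlapping, i.e. the movements are executed one after another in some order. -/
def Consecutive {k n : ℕ} (T : TransitionInstance k n) (τ : Fin n → ℝ) : Prop :=
  ∀ i j : Fin n, i ≠ j →
    τ i + (T.mov i).dur ≤ τ j ∨ τ j + (T.mov j).dur ≤ τ i

/-- Position (lower-left corner) of each label at global time `t`, when moving label `j`
starts its movement at time `τ j`; stationary labels never move. -/
noncomputable def traj {k n : ℕ} (T : TransitionInstance k n) (τ : Fin n → ℝ) (t : ℝ) :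
    Fin k ⊕ Fin n → ℝ × ℝ :=
  Sum.elim T.stat (fun j => (T.mov j).pos (t - τ j))

/-- The number of overlaps during the transition: the number of unordered pairs of distinct
labels whose interiors intersect at some moment. -/
noncomputable def overlapCount {k n : ℕ} (T : TransitionInstance k n) (τ : Fin n → ℝ) : ℕ :=
  Set.ncard {q : Sym2 (Fin k ⊕ Fin n) | ∃ a b : Fin k ⊕ Fin n,
    q = s(a, b) ∧ a ≠ b ∧ ∃ t : ℝ, Overlap (traj T τ t a) (traj T τ t b)}

/-- The movement graph `G_M`: there is an edge from `vᵢ` to `vⱼ` whenever the intermediate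
(if any) or end position of `Mⱼ` overlaps the start position of `Mᵢ`, or the end position of
`Mⱼ` overlaps the intermediate position (if any) of `Mᵢ`; in addition, if the intermediate
positions of `Mᵢ` and `Mⱼ` overlap and `i < j`, there is an edge from `vᵢ` to `vⱼ`. -/
def Edge {k n : ℕ} (T : TransitionInstance k n) (i j : Fin n) : Prop :=
  ((T.mov j).Diagonal ∧ Overlap (T.mov j).I (T.mov i).S) ∨
  Overlap (T.mov j).E (T.mov i).S ∨
  ((T.mov i).Diagonal ∧ Overlap (T.mov j).E (T.mov i).I) ∨
  ((T.mov i).Diagonal ∧ (T.mov j).Diagonal ∧ Overlap (T.mov i).I (T.mov j).I ∧ i < j)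

/-!
Along each leg of its path a label stays inside the union of the two adjacent unit squares at the
ends of the leg, so whatever it meets during its movement overlaps its start, intermediate or end
position.

* Stationary labels are disjoint from the start and end positions of a moving label. One that meets
  the intermediate position `I` without meeting the neighbours `S` and `E` of `I` must be shifted
  away from both of them, and two squares shifted from `I` towards the same corner overlap each
  other. So a moving label meets at most one stationary label, and only if its movement is diagonal.
* Of two moving labels one always rests while the other moves, so if they overlap then the movement
  graph has an edge from the later movement to the earlier one.

Executing the movements along a topological order of the graph without its feedback arc set leaves
only feedback arcs pointing from a later to an earlier movement.
-/

theorem abs_sub_lt_one_or_of_mem_uIcc {x y z p : ℝ} (hz : z ∈ uIcc x y) (hxy : |x - y| < 2)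
    (hzp : |z - p| < 1) : |x - p| < 1 ∨ |y - p| < 1 := by
  -- Otherwise `x` and `y` lie on opposite sides of `p`, each at distance at least `1`.
  rw [mem_uIcc] at hz
  grind

theorem abs_sub_lt_one_of_avoids_neighbour {x y p q : ℝ} (hxy : |x - y| ≤ 1)
    (hxp : |x - p| < 1) (hyp : ¬ |y - p| < 1) (hxq : |x - q| < 1) (hyq : ¬ |y - q| < 1) :
    |p - q| < 1 := by
  -- Both `p` and `q` lie within `1` of `x` on the side facing away from `y`.
  grind

theorem overlap_iff {a b : ℝ × ℝ} : Overlap a b ↔ |a.1 - b.1| < 1 ∧ |a.2 - b.2| < 1 := by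
  have interval_overlap (x y : ℝ) :
      (Ioo x (x + 1) ∩ Ioo y (y + 1)).Nonempty ↔ |x - y| < 1 := by
    rw [Ioo_inter_Ioo, nonempty_Ioo]
    grind
  simp only [Overlap, unitSq, interior_prod_eq, interior_Icc, prod_inter_prod, prod_nonempty_iff,
    interval_overlap]

theorem Overlap.symm {a b : ℝ × ℝ} (h : Overlap a b) : Overlap b a := by
  rwa [Overlap, inter_comm]

theorem sharesEdge_iff {a b : ℝ × ℝ} :
    SharesEdge a b ↔ a.1 = b.1 ∧ |a.2 - b.2| = 1 ∨ a.2 = b.2 ∧ |a.1 - b.1| = 1 := by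
  grind [SharesEdge]

theorem SharesEdge.overlap_of_mem_segment {a b c P : ℝ × ℝ} (hab : SharesEdge a b)
    (hc : c ∈ segment ℝ a b) (hcP : Overlap c P) : Overlap a P ∨ Overlap b P := by
  obtain ⟨hc₁, hc₂⟩ := Prod.segment_subset a b hc
  rw [segment_eq_uIcc] at hc₁ hc₂
  rw [overlap_iff] at hcP
  simp only [overlap_iff]
  rcases sharesEdge_iff.1 hab with ⟨h₁, h₂⟩ | ⟨h₂, h₁⟩
  · rw [← h₁, uIcc_self, mem_singleton_iff] at hc₁
    rw [← h₁, ← hc₁, ← and_or_left]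
    exact ⟨hcP.1, abs_sub_lt_one_or_of_mem_uIcc hc₂ (by linarith) hcP.2⟩
  · rw [← h₂, uIcc_self, mem_singleton_iff] at hc₂
    rw [← h₂, ← hc₂, ← or_and_right]
    exact ⟨abs_sub_lt_one_or_of_mem_uIcc hc₁ (by linarith) hcP.1, hcP.2⟩

theorem overlap_of_avoids_neighbours {c h v P Q : ℝ × ℝ}
    (hh : c.2 = h.2 ∧ |c.1 - h.1| ≤ 1) (hv : c.1 = v.1 ∧ |c.2 - v.2| ≤ 1)
    (hcP : Overlap c P) (hhP : ¬ Overlap h P) (hvP : ¬ Overlap v P)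
    (hcQ : Overlap c Q) (hhQ : ¬ Overlap h Q) (hvQ : ¬ Overlap v Q) : Overlap P Q := by
  rw [overlap_iff] at *
  rw [← hh.1] at hhP hhQ
  rw [← hv.1] at hvP hvQ
  exact ⟨abs_sub_lt_one_of_avoids_neighbour hh.2 hcP.1 (fun hP => hhP ⟨hP, hcP.2⟩)
      hcQ.1 (fun hQ => hhQ ⟨hQ, hcQ.2⟩),
    abs_sub_lt_one_of_avoids_neighbour hv.2 hcP.2 (fun hP => hvP ⟨hcP.1, hP⟩)
      hcQ.2 (fun hQ => hvQ ⟨hcQ.1, hQ⟩)⟩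

namespace Movement

variable {m : Movement}

theorem sharesEdge_start_intermediate (m : Movement) : SharesEdge m.S m.I := by
  rcases m.legs with ⟨hIE, hSE⟩ | ⟨hSI, -⟩
  · rwa [hIE]
  · exact hSI

theorem Diagonal.sharesEdge_intermediate_end (hm : m.Diagonal) : SharesEdge m.I m.E := by
  rcases m.legs with ⟨hIE, -⟩ | ⟨-, hIE, -⟩
  · exact absurd hIE hm
  · exact hIE

theorem Diagonal.fst_ne_and_snd_ne (hm : m.Diagonal) : m.S.1 ≠ m.E.1 ∧ m.S.2 ≠ m.E.2 := by
  rcases m.legs with ⟨hIE, -⟩ | ⟨-, -, hne⟩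
  · exact absurd hIE hm
  · exact hne

theorem Diagonal.overlap_of_overlap_intermediate (hm : m.Diagonal) {P Q : ℝ × ℝ}
    (hIP : Overlap m.I P) (hSP : ¬ Overlap m.S P) (hEP : ¬ Overlap m.E P)
    (hIQ : Overlap m.I Q) (hSQ : ¬ Overlap m.S Q) (hEQ : ¬ Overlap m.E Q) : Overlap P Q := by
  obtain ⟨hne₁, hne₂⟩ := hm.fst_ne_and_snd_ne
  rcases sharesEdge_iff.1 m.sharesEdge_start_intermediate with ⟨hSI, hd⟩ | ⟨hSI, hd⟩ <;>
  rcases sharesEdge_iff.1 hm.sharesEdge_intermediate_end with ⟨hIE, hd'⟩ | ⟨hIE, hd'⟩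
  · exact absurd (hSI.trans hIE) hne₁
  · rw [abs_sub_comm] at hd
    exact overlap_of_avoids_neighbours ⟨hIE, hd'.le⟩ ⟨hSI.symm, hd.le⟩ hIP hEP hSP hIQ hEQ hSQ
  · rw [abs_sub_comm] at hd
    exact overlap_of_avoids_neighbours ⟨hSI.symm, hd.le⟩ ⟨hIE, hd'.le⟩ hIP hSP hEP hIQ hSQ hEQ
  · exact absurd (hSI.trans hIE) hne₂

variable (m)

theorem dur_pos : 0 < m.dur := by
  unfold dur
  split_ifs <;> norm_num

theorem dur_le_two : m.dur ≤ 2 := by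
  unfold dur
  split_ifs <;> norm_num

theorem pos_of_nonpos {t : ℝ} (ht : t ≤ 0) : m.pos t = m.S :=
  if_pos ht

theorem pos_of_dur_le {t : ℝ} (ht : m.dur ≤ t) : m.pos t = m.E := by
  by_cases hIE : m.I = m.E
  · rw [dur, if_pos hIE] at ht
    rcases ht.eq_or_lt with rfl | ht
    · simp [pos, hIE]
    · simp [pos, hIE, ht.not_ge, (one_pos.trans ht).not_ge]
  · rw [dur, if_neg hIE] at ht
    rcases ht.eq_or_lt with rfl | ht
    · norm_num [pos]
    · simp [pos, ht.not_ge, (one_lt_two.trans ht).not_ge, (two_pos.trans ht).not_ge]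

theorem pos_mem_segments (t : ℝ) : m.pos t ∈ segment ℝ m.S m.I ∪ segment ℝ m.I m.E := by
  unfold pos
  split_ifs with h₀ h₁ h₂
  · exact .inl (left_mem_segment ..)
  · rw [segment_eq_image' ℝ m.S]
    exact .inl ⟨t, ⟨by linarith, h₁⟩, rfl⟩
  · rw [segment_eq_image' ℝ m.I]
    exact .inr ⟨t - 1, ⟨by linarith, by linarith⟩, rfl⟩
  · exact .inr (right_mem_segment ..)

theorem overlap_of_overlap_pos {P : ℝ × ℝ} {t : ℝ} (h : Overlap (m.pos t) P) :
    Overlap m.S P ∨ (m.Diagonal ∧ Overlap m.I P) ∨ Overlap m.E P := by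
  have diagonal_or_end (hI : Overlap m.I P) : (m.Diagonal ∧ Overlap m.I P) ∨ Overlap m.E P := by
    by_cases hIE : m.I = m.E
    · exact .inr (hIE ▸ hI)
    · exact .inl ⟨hIE, hI⟩
  rcases m.pos_mem_segments t with hpos | hpos
  · exact (m.sharesEdge_start_intermediate.overlap_of_mem_segment hpos h).imp_right diagonal_or_end
  · by_cases hm : m.Diagonal
    · exact .inr ((hm.sharesEdge_intermediate_end.overlap_of_mem_segment hpos h).elim
        diagonal_or_end .inr)
    · rw [not_not.1 hm, segment_same, mem_singleton_iff] at hpos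
      exact .inr (.inr (hpos ▸ h))

end Movement

theorem exists_equiv_fin_lt_of_acyclic {α : Type*} [Fintype α] {r : α → α → Prop}
    (hr : ∀ a, ¬ Relation.TransGen r a a) :
    ∃ e : α ≃ Fin (Fintype.card α), ∀ a b, r a b → e a < e b := by
  have : IsStrictOrder α (Relation.TransGen r) := { irrefl := hr, trans := fun _ _ _ => .trans }
  let : PartialOrder α := partialOrderOfSO (Relation.TransGen r)
  let : Fintype (LinearExtension α) := ‹Fintype α›
  let e : LinearExtension α ≃o Fin (Fintype.card α) := (Fintype.orderIsoFinOfCardEq _ rfl).symm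
  have hmono : StrictMono (toLinearExtension : α →o LinearExtension α) :=
    toLinearExtension.monotone.strictMono_of_injective fun _ _ h => h
  exact ⟨e.toEquiv, fun a b hab => e.strictMono (hmono (.single hab))⟩

section Transition

variable {k n : ℕ} (T : TransitionInstance k n)

theorem exists_consecutive_lt_of_acyclic {r : Fin n → Fin n → Prop}
    (hr : ∀ i, ¬ Relation.TransGen r i i) :
    ∃ τ : Fin n → ℝ, Consecutive T τ ∧ ∀ i j, r i j → τ i < τ j := by
  obtain ⟨e, he⟩ := exists_equiv_fin_lt_of_acyclic hr
  let τ (i : Fin n) : ℝ := 2 * (e i : ℕ)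
  have two_le_sub {i j : Fin n} (hij : e i < e j) : τ i + 2 ≤ τ j := by
    have : ((e i : ℕ) : ℝ) + 1 ≤ (e j : ℕ) := by exact_mod_cast hij
    simp only [τ]
    linarith
  refine ⟨τ, fun i j hij => ?_, fun i j hij => by linarith [two_le_sub (he i j hij)]⟩
  rcases lt_or_gt_of_ne (e.injective.ne hij) with hlt | hlt
  · exact .inl (by linarith [two_le_sub hlt, (T.mov i).dur_le_two])
  · exact .inr (by linarith [two_le_sub hlt, (T.mov j).dur_le_two])

theorem edge_of_overlap_pos {τ : Fin n → ℝ} {i j : Fin n} (hij : τ i + (T.mov i).dur ≤ τ j)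
    {t : ℝ} (h : Overlap ((T.mov i).pos (t - τ i)) ((T.mov j).pos (t - τ j))) : Edge T j i := by
  have hne : i ≠ j := by
    rintro rfl
    linarith [(T.mov i).dur_pos]
  have hS : ¬ Overlap (T.mov i).S (T.mov j).S :=
    T.free_start (.inr i) (.inr j) (Sum.inr_injective.ne hne)
  have hE : ¬ Overlap (T.mov j).E (T.mov i).E :=
    T.free_end (.inr j) (.inr i) (Sum.inr_injective.ne hne.symm)
  rcases le_total t (τ j) with ht | ht
  · rw [(T.mov j).pos_of_nonpos (sub_nonpos.2 ht)] at h
    rcases (T.mov i).overlap_of_overlap_pos h with h | h | h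
    · exact absurd h hS
    · exact .inl h
    · exact .inr (.inl h)
  · rw [(T.mov i).pos_of_dur_le (by linarith)] at h
    rcases (T.mov j).overlap_of_overlap_pos h.symm with h | ⟨hj, h⟩ | h
    · exact .inr (.inl h.symm)
    · exact .inr (.inr (.inl ⟨hj, h.symm⟩))
    · exact absurd h hE

/-- The pairs of a moving and a stationary label that overlap at some time. This does not depend on
the schedule, as every movement passes through all its positions. -/
def stationaryOverlaps : Set (Fin n × Fin k) :=
  {c | ∃ t, Overlap ((T.mov c.1).pos t) (T.stat c.2)}

/-- The edges of the movement graph from a later to an earlier movement of the schedule `τ`. -/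
def backwardEdges (τ : Fin n → ℝ) : Set (Fin n × Fin n) :=
  {e | Edge T e.1 e.2 ∧ τ e.2 < τ e.1}

theorem ncard_stationaryOverlaps_le :
    (stationaryOverlaps T).ncard ≤ {i | (T.mov i).Diagonal}.ncard := by
  have hS (i x) : ¬ Overlap (T.mov i).S (T.stat x) := T.free_start (.inr i) (.inl x) Sum.inr_ne_inl
  have hE (i x) : ¬ Overlap (T.mov i).E (T.stat x) := T.free_end (.inr i) (.inl x) Sum.inr_ne_inl
  have diagonal_and_overlap {i x} (h : (i, x) ∈ stationaryOverlaps T) :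
      (T.mov i).Diagonal ∧ Overlap (T.mov i).I (T.stat x) := by
    obtain ⟨t, ht⟩ := h
    exact ((T.mov i).overlap_of_overlap_pos ht).resolve_left (hS i x) |>.resolve_right (hE i x)
  refine ncard_le_ncard_of_injOn Prod.fst (fun c hc => (diagonal_and_overlap hc).1) ?_
  rintro ⟨i, x⟩ hx ⟨_, y⟩ hy rfl
  obtain ⟨hi, hIx⟩ := diagonal_and_overlap hx
  obtain ⟨-, hIy⟩ := diagonal_and_overlap hy
  have hxy : Overlap (T.stat x) (T.stat y) :=
    hi.overlap_of_overlap_intermediate hIx (hS i x) (hE i x) hIy (hS i y) (hE i y)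
  by_contra hne
  exact T.free_start (.inl x) (.inl y) (by simpa using hne) hxy

variable {T}

theorem Consecutive.mem_backwardEdges {τ : Fin n → ℝ} (hτ : Consecutive T τ) {i j : Fin n}
    (hij : i ≠ j) {t : ℝ} (h : Overlap ((T.mov i).pos (t - τ i)) ((T.mov j).pos (t - τ j))) :
    (i, j) ∈ backwardEdges T τ ∨ (j, i) ∈ backwardEdges T τ := by
  rcases hτ i j hij with hle | hle
  · exact .inr ⟨edge_of_overlap_pos T hle h, by linarith [(T.mov i).dur_pos]⟩
  · exact .inl ⟨edge_of_overlap_pos T hle h.symm, by linarith [(T.mov j).dur_pos]⟩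

theorem Consecutive.overlapCount_le {τ : Fin n → ℝ} (hτ : Consecutive T τ) :
    overlapCount T τ ≤ (stationaryOverlaps T).ncard + (backwardEdges T τ).ncard := by
  let movStat (c : Fin n × Fin k) : Sym2 (Fin k ⊕ Fin n) := s(.inr c.1, .inl c.2)
  let movMov (e : Fin n × Fin n) : Sym2 (Fin k ⊕ Fin n) := s(.inr e.1, .inr e.2)
  calc overlapCount T τ
      ≤ (movStat '' stationaryOverlaps T ∪ movMov '' backwardEdges T τ).ncard := by
        refine ncard_le_ncard ?_
        rintro q ⟨a, b, rfl, hab, t, h⟩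
        rcases a with x | i <;> rcases b with y | j
        · exact absurd h (T.free_start (.inl x) (.inl y) hab)
        · exact .inl ⟨(j, x), ⟨_, h.symm⟩, Sym2.eq_swap⟩
        · exact .inl ⟨(i, y), ⟨_, h⟩, rfl⟩
        · rcases hτ.mem_backwardEdges (ne_of_apply_ne Sum.inr hab) h with he | he
          · exact .inr ⟨(i, j), he, rfl⟩
          · exact .inr ⟨(j, i), he, Sym2.eq_swap⟩
    _ ≤ (movStat '' stationaryOverlaps T).ncard + (movMov '' backwardEdges T τ).ncard :=
        ncard_union_le _ _
    _ ≤ (stationaryOverlaps T).ncard + (backwardEdges T τ).ncard :=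
        add_le_add ncard_image_le ncard_image_le

end Transition

theorem consecutive_overlaps_le_of_feedback_arc_set_general {k n : ℕ} (T : TransitionInstance k n)
    (F : Finset (Fin n × Fin n))
    (hacyclic : ∀ i : Fin n,
      ¬ Relation.TransGen (fun a b : Fin n => Edge T a b ∧ (a, b) ∉ F) i i) :
    ∃ τ : Fin n → ℝ, Consecutive T τ ∧
      overlapCount T τ ≤ {i | (T.mov i).Diagonal}.ncard + F.card := by
  obtain ⟨τ, hτ, hlt⟩ := exists_consecutive_lt_of_acyclic T hacyclic
  have hF : backwardEdges T τ ⊆ F := by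
    rintro ⟨i, j⟩ ⟨hedge, hji⟩
    by_contra hmem
    exact hji.asymm (hlt i j ⟨hedge, hmem⟩)
  refine ⟨τ, hτ, hτ.overlapCount_le.trans (add_le_add (ncard_stationaryOverlaps_le T) ?_)⟩
  exact (ncard_le_ncard hF).trans (ncard_coe_finset F).le

/-- If the movement graph of a consecutive transition instance with `n` moving labels has a
feedback arc set of size `m` (a set of edges whose removal leaves no directed cycle), then there
is an order in which to execute the `n` movements consecutively such that at most `n + m`
overlaps occur during the transition. -/
theorem consecutive_overlaps_le_of_feedback_arc_set {k n : ℕ} (T : TransitionInstance k n)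
    (F : Finset (Fin n × Fin n)) (m : ℕ)
    (hF : ∀ e ∈ F, Edge T e.1 e.2)
    (hcard : F.card = m)
    (hacyclic : ∀ i : Fin n,
      ¬ Relation.TransGen (fun a b : Fin n => Edge T a b ∧ (a, b) ∉ F) i i) :
    ∃ τ : Fin n → ℝ, Consecutive T τ ∧ overlapCount T τ ≤ n + m := by
  obtain ⟨τ, hτ, hle⟩ := consecutive_overlaps_le_of_feedback_arc_set_general T F hacyclic
  exact ⟨τ, hτ, hle.trans (add_le_add ((ncard_le_card _).trans_eq (Nat.card_fin n)) hcard.le)⟩
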